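/- Let α be a real number with 0 < α ≤ 0.6, let b₀ and k be positive integers, and let b_0, b_1, …, b_{b₀+k} be a non-decreasing sequence of positive real numbers with b_0 = b₀. Then k·∑_{j=0}^{b₀−1} (α·(b_{j+1} − b_j) + 1)/b_j + ∑_{j=b₀}^{b₀+k−1} ( (α·(b_{j+1} − b_j) + 1)·(k + b₀ − j)/b_j − 1/(2·b_j) ) ≥ α·(k + b₀)·ln((k + b₀)/b₀) + α·k·ln(1/α). -/

import Mathlib

open Real

lemma aux_f (t : ℝ) (ht : 0 ≤ t) :
    (1 + t) * Real.log (1 + t) ≤ t + t * Real.log (1 + t / 2) := by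
  have hd : ∀ s : ℝ, 0 ≤ s → HasDerivAt
      (fun s : ℝ => s + s * Real.log (1 + s / 2) - (1 + s) * Real.log (1 + s))
      (1 + (1 * Real.log (1 + s / 2) + s * ((1 / 2) / (1 + s / 2)))
        - (1 * Real.log (1 + s) + (1 + s) * (1 / (1 + s)))) s := by
    intro s hs
    have h1 : HasDerivAt (fun s : ℝ => 1 + s / 2) (1 / 2) s :=
      ((hasDerivAt_id s).div_const 2).const_add 1
    have h2 : HasDerivAt (fun s : ℝ => 1 + s) 1 s := (hasDerivAt_id s).const_add 1
    have h3 := h1.log (by positivity)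
    have h4 := h2.log (by positivity)
    exact ((hasDerivAt_id s).add ((hasDerivAt_id s).mul h3)).sub (h2.mul h4)
  have hm : MonotoneOn
      (fun s : ℝ => s + s * Real.log (1 + s / 2) - (1 + s) * Real.log (1 + s)) (Set.Ici 0) := by
    apply monotoneOn_of_deriv_nonneg (convex_Ici 0)
    · intro s hs
      exact (hd s hs).continuousAt.continuousWithinAt
    · intro s hs
      rw [interior_Ici] at hs
      exact (hd s (le_of_lt hs)).differentiableAt.differentiableWithinAt
    · intro s hs
      rw [interior_Ici] at hs
      have hs' : 0 < s := hs
      rw [(hd s (le_of_lt hs)).deriv]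
      have h1 := Real.log_le_sub_one_of_pos (x := (1 + s) / (1 + s / 2)) (by positivity)
      rw [Real.log_div (by positivity) (by positivity)] at h1
      have h2 : (1 + s) / (1 + s / 2) - 1 = s * ((1 / 2) / (1 + s / 2)) := by
        field_simp
        ring
      have h3 : (1 + s) * (1 / (1 + s)) = 1 := by field_simp
      rw [h2] at h1
      rw [h3]
      linarith
  have := hm (Set.mem_Ici.2 le_rfl) (Set.mem_Ici.2 ht) ht
  simp at this
  linarith

lemma aux_abel (K : ℝ) (z : ℕ → ℝ) (n : ℕ) :
    ∑ i ∈ Finset.range n, (K - i) * (z (i + 1) - z i)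
      = ∑ i ∈ Finset.range n, z (i + 1) + (K - n) * z n - K * z 0 := by
  induction n with
  | zero => simp
  | succ n ih =>
    rw [Finset.sum_range_succ, Finset.sum_range_succ, ih]
    push_cast
    ring

lemma aux_csum (K : ℝ) (n : ℕ) :
    ∑ i ∈ Finset.range n, (K - i - 1 / 2) = K * n - (n : ℝ) ^ 2 / 2 := by
  induction n with
  | zero => simp
  | succ n ih =>
    rw [Finset.sum_range_succ, ih]
    push_cast
    ring

noncomputable def auxG (α x : ℝ) (m k : ℕ) (j : ℕ) : ℝ :=
  (if j ≤ m then 0 else α) -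
    (if j < m then (k : ℝ) else if j < m + k then (k : ℝ) + m - j - 1 / 2 else 0) / x

lemma auxG_mono (α x : ℝ) (hα : 0 < α) (hx : 0 < x) (m k : ℕ) : Monotone (auxG α x m k) := by
  apply monotone_nat_of_le_succ
  intro j
  unfold auxG
  apply sub_le_sub
  · split_ifs <;> first | omega | linarith
  · apply div_le_div_of_nonneg_right _ hx.le
    split_ifs with h1 h2 h3 h4 h5 h6 <;> try omega
    · exact le_rfl
    · have : m = j + 1 := by omega
      subst this
      push_cast
      linarith
    · push_cast
      linarith
    · positivity
    · have : ((j : ℝ) + 1) ≤ m + k := by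
        have : j + 1 ≤ m + k := by omega
        exact_mod_cast this
      linarith
    · exact le_rfl

lemma auxG_sum (α x : ℝ) (m k : ℕ) (y : ℕ → ℝ) :
    ∑ j ∈ Finset.range (m + (k + 1)), auxG α x m k j * y j
      = α * ∑ i ∈ Finset.range k, y (m + (i + 1))
        - (∑ j ∈ Finset.range m, (k / x) * y j
          + ∑ i ∈ Finset.range k, (((k : ℝ) - i - 1 / 2) / x) * y (m + i)) := by
  rw [Finset.sum_range_add]
  have h1 : ∑ j ∈ Finset.range m, auxG α x m k j * y j
      = - ∑ j ∈ Finset.range m, (k / x) * y j := by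
    rw [← Finset.sum_neg_distrib]
    apply Finset.sum_congr rfl
    intro j hj
    have hj := Finset.mem_range.1 hj
    simp [auxG, hj, hj.le]
  have h2 : ∑ i ∈ Finset.range (k + 1), auxG α x m k (m + i) * y (m + i)
      = ∑ i ∈ Finset.range (k + 1), (if i = 0 then 0 else α) * y (m + i)
       - ∑ i ∈ Finset.range (k + 1),
          ((if i < k then (k : ℝ) - i - 1 / 2 else 0) / x) * y (m + i) := by
    rw [← Finset.sum_sub_distrib]
    apply Finset.sum_congr rfl
    intro i hi
    rw [← sub_mul]
    congr 1
    unfold auxG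
    have e : (k : ℝ) + m - ((m + i : ℕ) : ℝ) - 1 / 2 = k - i - 1 / 2 := by
      push_cast
      ring
    rw [e]
    simp
  rw [h1, h2, Finset.sum_range_succ', Finset.sum_range_succ (n := k), Finset.mul_sum]
  have h3 : ∑ i ∈ Finset.range k, ((if i < k then (k : ℝ) - i - 1 / 2 else 0) / x) * y (m + i)
      = ∑ i ∈ Finset.range k, (((k : ℝ) - i - 1 / 2) / x) * y (m + i) := by
    apply Finset.sum_congr rfl
    intro i hi
    rw [if_pos (Finset.mem_range.1 hi)]
  rw [h3]
  simp
  ring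

lemma aux_inv (c b x : ℝ) (hc : 0 ≤ c) (hb : 0 < b) (hx : 0 < x) :
    (c / x) * (1 + Real.log x) - (c / x) * Real.log b ≤ c / b := by
  have h := Real.log_le_sub_one_of_pos (x := x / b) (by positivity)
  rw [Real.log_div hx.ne' hb.ne'] at h
  have h2 : c / b = (c / x) * (x / b) := by field_simp
  rw [h2]
  have := mul_le_mul_of_nonneg_left h (div_nonneg hc hx.le)
  linarith

lemma aux_log (a b : ℝ) (ha : 0 < a) (hb : 0 < b) :
    Real.log b - Real.log a ≤ (b - a) / a := by
  have h := Real.log_le_sub_one_of_pos (x := b / a) (by positivity)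
  rw [Real.log_div hb.ne' ha.ne'] at h
  have : (b - a) / a = b / a - 1 := by field_simp
  linarith

theorem stmt_6 (α : ℝ) (hα0 : 0 < α) (hα : α ≤ 0.6)
    (b₀ k : ℕ) (hb₀ : 0 < b₀) (hk : 0 < k)
    (b : ℕ → ℝ) (hpos : ∀ j ≤ b₀ + k, 0 < b j) (hmono : ∀ j < b₀ + k, b j ≤ b (j + 1))
    (hb0 : b 0 = (b₀ : ℝ)) :
    (k : ℝ) * ∑ j ∈ Finset.range b₀, (α * (b (j + 1) - b j) + 1) / b j +
      ∑ j ∈ Finset.Ico b₀ (b₀ + k),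
        ((α * (b (j + 1) - b j) + 1) * ((k : ℝ) + (b₀ : ℝ) - (j : ℝ)) / b j - 1 / (2 * b j)) ≥
    α * ((k : ℝ) + (b₀ : ℝ)) * Real.log (((k : ℝ) + (b₀ : ℝ)) / (b₀ : ℝ)) +
      α * (k : ℝ) * Real.log (1 / α) := by
  have hB : (0 : ℝ) < b₀ := by exact_mod_cast hb₀
  have hK : (0 : ℝ) < k := by exact_mod_cast hk
  obtain ⟨x, hxdef⟩ : ∃ x : ℝ, x = ((b₀ : ℝ) + k / 2) / α := ⟨_, rfl⟩
  have hx : 0 < x := by rw [hxdef]; positivity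
  obtain ⟨y, hy⟩ : ∃ y : ℕ → ℝ, ∀ j, y j = Real.log (b j) := ⟨_, fun _ => rfl⟩
  -- first sum
  have hS1 : (k : ℝ) * ∑ j ∈ Finset.range b₀, (α * (b (j + 1) - b j) + 1) / b j ≥
      α * k * (y b₀ - y 0) + (b₀ * (k / x) * (1 + Real.log x)
        - ∑ j ∈ Finset.range b₀, (k / x) * y j) := by
    rw [← Finset.sum_range_sub y, Finset.mul_sum, Finset.mul_sum]
    have : (b₀ : ℝ) * (k / x) * (1 + Real.log x)
        = ∑ j ∈ Finset.range b₀, (k / x) * (1 + Real.log x) := by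
      rw [Finset.sum_const, Finset.card_range, nsmul_eq_mul]
      ring
    rw [this, ← Finset.sum_sub_distrib, ← Finset.sum_add_distrib]
    apply Finset.sum_le_sum
    intro j hj
    have hj := Finset.mem_range.1 hj
    have p1 := hpos j (by omega)
    have h1 := aux_log (b j) (b (j + 1)) p1 (hpos (j + 1) (by omega))
    have h2 := aux_inv k (b j) x hK.le p1 hx
    rw [hy, hy]
    have h3 := mul_le_mul_of_nonneg_left h1 (mul_pos hα0 hK).le
    have e : (k : ℝ) * ((α * (b (j + 1) - b j) + 1) / b j)
      = α * k * ((b (j + 1) - b j) / b j) + k / b j := by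
      field_simp
    rw [e]
    linarith
  have hS2 : ∑ j ∈ Finset.Ico b₀ (b₀ + k),
        ((α * (b (j + 1) - b j) + 1) * ((k : ℝ) + (b₀ : ℝ) - (j : ℝ)) / b j - 1 / (2 * b j)) ≥
      α * (∑ i ∈ Finset.range k, ((k : ℝ) - i) * (y (b₀ + (i + 1)) - y (b₀ + i)))
      + ((∑ i ∈ Finset.range k, ((k : ℝ) - i - 1 / 2)) * ((1 + Real.log x) / x)
        - ∑ i ∈ Finset.range k, (((k : ℝ) - i - 1 / 2) / x) * y (b₀ + i)) := by
    rw [Finset.sum_Ico_eq_sum_range, Finset.mul_sum, Finset.sum_mul, ← Finset.sum_sub_distrib,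
      ← Finset.sum_add_distrib, Nat.add_sub_cancel_left]
    apply Finset.sum_le_sum
    intro i hi
    have hi := Finset.mem_range.1 hi
    have hi' : (i : ℝ) + 1 ≤ k := by exact_mod_cast hi
    have p1 := hpos (b₀ + i) (by omega)
    have h1 := aux_log (b (b₀ + i)) (b (b₀ + (i + 1))) p1 (hpos _ (by omega))
    have h2 := aux_inv ((k : ℝ) - i - 1 / 2) (b (b₀ + i)) x (by linarith) p1 hx
    rw [hy, hy]
    have h3 := mul_le_mul_of_nonneg_left h1
      (mul_nonneg hα0.le (show (0 : ℝ) ≤ (k : ℝ) - i by linarith))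
    have e : (α * (b (b₀ + i + 1) - b (b₀ + i)) + 1) * ((k : ℝ) + (b₀ : ℝ) - ((b₀ + i : ℕ) : ℝ))
          / b (b₀ + i) - 1 / (2 * b (b₀ + i))
      = α * ((k : ℝ) - i) * ((b (b₀ + (i + 1)) - b (b₀ + i)) / b (b₀ + i))
        + ((k : ℝ) - i - 1 / 2) / b (b₀ + i) := by
      rw [← add_assoc]
      push_cast
      field_simp
      ring
    rw [e]
    have e2 : ((k : ℝ) - i - 1 / 2) * ((1 + Real.log x) / x)
      = ((k : ℝ) - i - 1 / 2) / x * (1 + Real.log x) := by ring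
    rw [e2]
    linarith
  have hab := aux_abel (k : ℝ) (fun i => y (b₀ + i)) k
  simp only [add_zero, sub_self, zero_mul] at hab
  rw [hab, aux_csum] at hS2
  -- Chebyshev
  have hmon : ∀ n, n ≤ b₀ + k → ∀ m, m ≤ n → y m ≤ y n := by
    intro n
    induction n with
    | zero =>
      intro _ m hm
      rw [Nat.le_zero.1 hm]
    | succ n ih =>
      intro hn m hm
      rcases Nat.lt_or_ge m (n + 1) with h | h
      · refine (ih (by omega) m (by omega)).trans ?_
        rw [hy, hy]
        exact Real.log_le_log (hpos n (by omega)) (hmono n (by omega))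
      · rw [le_antisymm hm h]
  have hmv : MonovaryOn (auxG α x b₀ k) y (Finset.range (b₀ + (k + 1)) : Set ℕ) := by
    intro i hi j hj hij
    apply auxG_mono α x hα0 hx
    by_contra hlt
    have hi : i < b₀ + (k + 1) := by simpa using hi
    exact absurd (hmon i (by omega) j (by omega)) (not_le.2 hij)
  have hch := hmv.sum_mul_sum_le_card_mul_sum
  have hg0 : ∑ j ∈ Finset.range (b₀ + (k + 1)), auxG α x b₀ k j = 0 := by
    have h := auxG_sum α x b₀ k (fun _ => 1)
    simp only [mul_one] at h
    rw [h, ← Finset.sum_div, ← Finset.sum_div, aux_csum]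
    simp only [Finset.sum_const, Finset.card_range, nsmul_eq_mul]
    rw [hxdef]
    field_simp
    ring
  rw [hg0, zero_mul, Finset.card_range] at hch
  have hch2 : 0 ≤ ∑ j ∈ Finset.range (b₀ + (k + 1)), auxG α x b₀ k j * y j :=
    nonneg_of_mul_nonneg_right hch (by positivity)
  rw [auxG_sum] at hch2
  -- main constant
  have hc : (b₀ : ℝ) * (k / x) * (1 + Real.log x)
      + ((k : ℝ) * k - (k : ℝ) ^ 2 / 2) * ((1 + Real.log x) / x) = α * k * (1 + Real.log x) := by
    have : (b₀ : ℝ) + k / 2 = α * x := by rw [hxdef]; field_simp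
    have e : (b₀ : ℝ) * (k / x) * (1 + Real.log x)
      + ((k : ℝ) * k - (k : ℝ) ^ 2 / 2) * ((1 + Real.log x) / x)
      = ((b₀ : ℝ) + k / 2) * k / x * (1 + Real.log x) := by ring
    rw [e, this]
    field_simp
  have hfin : α * ((k : ℝ) + (b₀ : ℝ)) * Real.log (((k : ℝ) + (b₀ : ℝ)) / (b₀ : ℝ)) +
      α * (k : ℝ) * Real.log (1 / α) ≤ α * k * (1 + Real.log x) - α * k * y 0 := by
    have h := aux_f ((k : ℝ) / b₀) (by positivity)
    have e1 : 1 + (k : ℝ) / b₀ = ((k : ℝ) + b₀) / b₀ := by field_simp; ring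
    have e2 : Real.log x = Real.log (1 + (k : ℝ) / b₀ / 2) + Real.log b₀ + Real.log (1 / α) := by
      rw [← Real.log_mul (by positivity) (by positivity),
        ← Real.log_mul (by positivity) (by positivity), hxdef]
      congr 1
      field_simp
    rw [hy, hb0, e2]
    rw [e1] at h
    have h' := mul_le_mul_of_nonneg_left h (mul_pos hα0 hB).le
    have e3 : α * b₀ * (((k : ℝ) + b₀) / b₀ * Real.log (((k : ℝ) + b₀) / b₀))
      = α * ((k : ℝ) + (b₀ : ℝ)) * Real.log (((k : ℝ) + (b₀ : ℝ)) / (b₀ : ℝ)) := by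
      field_simp
    have e4 : α * b₀ * ((k : ℝ) / b₀ + (k : ℝ) / b₀ * Real.log (1 + (k : ℝ) / b₀ / 2))
      = α * k * (1 + Real.log (1 + (k : ℝ) / b₀ / 2)) := by
      field_simp
    rw [e3, e4] at h'
    linarith
  linarith
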